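/- Let (R, m, k) be a Cohen-Macaulay local ring with canonical module ω_R and char k != 2, and let M be a finitely generated maximal Cohen-Macaulay R-module such that (1) M has rank 1 and (2) Ext^i_R(M, M^∨) = 0 for 1 <= i <= dim R, where M^∨ = Hom_R(M, ω_R). Then M is cyclic. -/

import Mathlib

/-!
The idea is that a second generator of `M` would produce a non-symmetric bilinear form on `M`
with values in the residue field `k`, whereas every such form has to be symmetric.

* Since `M` has rank one and `ω` is torsion-free, every bilinear map `M × M → ω` is symmetric
  (`symm_of_rankOne`). Torsion-freeness holds because `ω` admits a regular sequence of length
  `d = dim R`, so that its associated primes have `d`-dimensional quotients and are minimal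
  (`length_le_coheight`, `isSMulRegular_of_nonZeroDivisor`).
* Let `rs` be an `ω`-regular sequence of length `d`. The vanishing of `Ext^i(M, ω)` and of
  `Ext^i(M, Hom(M, ω))` for `1 ≤ i ≤ d` lets every bilinear map `M × M → ω/(rs)ω` lift, one
  element of `rs` at a time, to a bilinear map `M × M → ω`. Hence it is symmetric
  (`symm_of_lift`).
* `ω/(rs)ω` has depth zero, so it contains a copy of `k` (`exists_residue_embedding`), and all
  bilinear maps `M × M → k` are symmetric. Applied to `f ⊗ g` with `f, g` linear forms on
  `M/mM`, this forces `dim M/mM ≤ 1`, and Nakayama's lemma gives a generator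
  (`cyclic_of_symm`).

The vanishing of `Ext^i(M, ω)` for `i > 0` is not an assumption. Finiteness of the injective
dimension of `ω` is first sharpened to `Ext^i(N, ω) = 0` for `i > d` and `N` finitely generated:
by dévissage and Nakayama, the vanishing in degree `i + 1` reduces degree `i` to `N = k`, which
embeds into `R/(x₁, …, x_d)`, a module of projective dimension `d` (`extZero_of_injDim`).
Cutting `M` down by an `M`-regular sequence of length `d` then lowers the bound from `d` to `0`
(`extZero_of_isWeaklyRegular`).
-/

/-!
STATEMENT 15: Let (R, m, k) be a Cohen-Macaulay local ring with canonical module ω_R and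
char k ≠ 2, and let M be a finitely generated maximal Cohen-Macaulay R-module such that
(1) M has rank 1 and (2) Ext^i_R(M, M^∨) = 0 for 1 ≤ i ≤ dim R, where M^∨ = Hom_R(M, ω_R).
Then M is cyclic.

Depth is formalized via the standard (Rees) characterization: the depth of `M` w.r.t. `m` is
at least `d` iff `Ext^i_R(R/m, M) = 0` for `i < d`; a canonical module of the Cohen-Macaulay
local ring `(R, m)` of dimension `d` is a finitely generated maximal Cohen-Macaulay module of
finite injective dimension and of type 1.
-/

open CategoryTheory Limits TensorProduct

universe u

/-- `Ext^i_R(R/m, M)` as a module category object. -/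
noncomputable def extResidue (R : Type u) [CommRing R] (m : Ideal R) (M : Type u)
    [AddCommGroup M] [Module R M] (i : ℕ) : ModuleCat.{u} R :=
  ((Ext R (ModuleCat.{u} R) i).obj (Opposite.op (ModuleCat.of R (R ⧸ m)))).obj (ModuleCat.of R M)

/-- Depth of `M` (w.r.t. the ideal `m`) is at least `d`:
`Ext^i_R(R/m, M) = 0` for all `i < d`. -/
def DepthGE (R : Type u) [CommRing R] (m : Ideal R) (M : Type u) [AddCommGroup M]
    [Module R M] (d : ℕ) : Prop :=
  ∀ i : ℕ, i < d → IsZero (extResidue R m M i)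

/-- `ω` is a canonical module for `(R, m)` of Krull dimension `d`: it is finitely generated,
maximal Cohen-Macaulay (depth ≥ d), of finite injective dimension, and of type 1
(`Ext^d_R(R/m, ω)` is a simple `R`-module). -/
def IsCanonicalModule (R : Type u) [CommRing R] (m : Ideal R) (d : ℕ) (ω : Type u)
    [AddCommGroup ω] [Module R ω] : Prop :=
  Module.Finite R ω ∧ DepthGE R m ω d ∧
  (∃ n : ℕ, ∀ (N : ModuleCat.{u} R) (i : ℕ), n < i →
    IsZero (((Ext R (ModuleCat.{u} R) i).obj (Opposite.op N)).obj (ModuleCat.of R ω))) ∧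
  IsSimpleModule R (extResidue R m ω d)

/-- `M` has rank one: `M ⊗_R Q` is free of rank 1 over the total ring of fractions `Q` of `R`. -/
def HasRankOne (R : Type u) [CommRing R] (M : Type u) [AddCommGroup M] [Module R M] : Prop :=
  Nonempty ((FractionRing R ⊗[R] M) ≃ₗ[FractionRing R] FractionRing R)

/-! ### Comparison of the two Ext constructions -/

/-- The `Ext` defined as a left derived functor vanishes if and only if the `Ext` of the derived
category does: both are computed by a projective resolution of `X`. The long exact sequences are
available for the latter. -/
theorem isZero_Ext_iff {R : Type u} [CommRing R] (X Y : ModuleCat.{u} R) (n : ℕ) :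
    IsZero (((Ext R (ModuleCat.{u} R) n).obj (Opposite.op X)).obj Y) ↔
      Subsingleton (Abelian.Ext X Y n) := by
  let P := projectiveResolution X
  rw [(P.isoExt n Y).isZero_iff, ← HomologicalComplex.exactAt_iff_isZero_homology]
  cases n with
  | zero =>
    rw [HomologicalComplex.exactAt_iff' _ 0 0 1 (by simp) (by simp),
      ShortComplex.moduleCat_exact_iff]
    constructor
    · intro h
      refine subsingleton_of_forall_eq 0 fun α => ?_
      obtain ⟨f, hf, rfl⟩ := P.extMk_surjective α 1 rfl
      obtain ⟨g, hg⟩ := h f hf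
      have : (P.complex.linearYonedaObj R Y).d 0 0 = 0 := HomologicalComplex.shape _ _ _ (by simp)
      obtain rfl : f = 0 := by
        rw [← hg]
        change ((P.complex.linearYonedaObj R Y).d 0 0) g = 0
        rw [this]; rfl
      simp
    · intro h f hf
      refine ⟨0, ?_⟩
      have hs : Subsingleton (X ⟶ Y) := Abelian.Ext.homEquiv₀.symm.subsingleton
      have hf' : P.complex.d 1 0 ≫ f = 0 := hf
      obtain ⟨l, hl⟩ := CokernelCofork.IsColimit.desc' P.isColimitCokernelCofork f hf'
      have hl0 : l = 0 := hs.elim _ _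
      rw [← hl, hl0]
      exact comp_zero (C := ModuleCat.{u} R)
  | succ n =>
    rw [HomologicalComplex.exactAt_iff' _ n (n+1) (n+2) (by simp) (by simp),
      ShortComplex.moduleCat_exact_iff]
    constructor
    · intro h
      refine subsingleton_of_forall_eq 0 fun α => ?_
      obtain ⟨f, hf, rfl⟩ := P.extMk_surjective α (n+2) rfl
      rw [P.extMk_eq_zero_iff f (n+2) rfl hf n rfl]
      exact h f hf
    · intro h f hf
      exact (P.extMk_eq_zero_iff f (n+2) rfl hf n rfl).mp (Subsingleton.elim _ _)

/-! ### Vanishing of Ext along short exact sequences -/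

section ses
variable {R : Type u} [CommRing R]

/-- Vanishing of `Ext^i_R(A, B)`, for unbundled modules `A` and `B`. -/
abbrev ExtZero (R : Type u) [CommRing R] (A B : Type u) [AddCommGroup A] [Module R A]
    [AddCommGroup B] [Module R B] (i : ℕ) : Prop :=
  Subsingleton (Abelian.Ext (ModuleCat.of R A) (ModuleCat.of R B) i)

variable {A B C N : Type u} [AddCommGroup A] [Module R A] [AddCommGroup B] [Module R B]
  [AddCommGroup C] [Module R C] [AddCommGroup N] [Module R N]
  {f : A →ₗ[R] B} {g : B →ₗ[R] C}

theorem shortExact_of (hf : Function.Injective f) (hg : Function.Surjective g)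
    (hfg : Function.Exact f g) :
    (ShortComplex.mk (ModuleCat.ofHom f) (ModuleCat.ofHom g)
      (by ext x; exact hfg.apply_apply_eq_zero x)).ShortExact where
  exact := (ShortComplex.moduleCat_exact_iff _).mpr fun x hx => (hfg x).mp hx
  mono_f := (ModuleCat.mono_iff_injective _).mpr hf
  epi_g := (ModuleCat.epi_iff_surjective _).mpr hg

theorem ExtZero.of_ses_left₁ (hf : Function.Injective f) (hg : Function.Surjective g)
    (hfg : Function.Exact f g) {i : ℕ} (hB : ExtZero R B N i) (hC : ExtZero R C N (i + 1)) :
    ExtZero R A N i :=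
  subsingleton_of_forall_eq 0 fun x => by
    obtain ⟨y, rfl⟩ := Abelian.Ext.contravariant_sequence_exact₁ (shortExact_of hf hg hfg) _ x
      (add_comm 1 i) (hC.elim _ _)
    rw [hB.elim y 0]; exact Abelian.Ext.comp_zero ..

theorem ExtZero.of_ses_left₂ (hf : Function.Injective f) (hg : Function.Surjective g)
    (hfg : Function.Exact f g) {i : ℕ} (hA : ExtZero R A N i) (hC : ExtZero R C N i) :
    ExtZero R B N i :=
  subsingleton_of_forall_eq 0 fun x => by
    obtain ⟨y, rfl⟩ := Abelian.Ext.contravariant_sequence_exact₂ (shortExact_of hf hg hfg) _ x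
      (hA.elim _ _)
    rw [hC.elim y 0]; exact Abelian.Ext.comp_zero ..

theorem ExtZero.of_ses_right₃ (hf : Function.Injective f) (hg : Function.Surjective g)
    (hfg : Function.Exact f g) {i : ℕ} (hB : ExtZero R N B i) (hA : ExtZero R N A (i + 1)) :
    ExtZero R N C i :=
  subsingleton_of_forall_eq 0 fun x => by
    obtain ⟨y, rfl⟩ := Abelian.Ext.covariant_sequence_exact₃ _ (shortExact_of hf hg hfg) x
      rfl (hA.elim _ _)
    rw [hB.elim y 0]; exact Abelian.Ext.zero_comp ..

/-- If `Ext^1(N, A) = 0`, linear maps from `N` lift along `B → B/A`. -/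
theorem ExtZero.exists_lift (hf : Function.Injective f) (hg : Function.Surjective g)
    (hfg : Function.Exact f g) (hA : ExtZero R N A 1) (φ : N →ₗ[R] C) :
    ∃ ψ : N →ₗ[R] B, g ∘ₗ ψ = φ := by
  obtain ⟨y, hy⟩ := Abelian.Ext.covariant_sequence_exact₃ _ (shortExact_of hf hg hfg)
    (Abelian.Ext.mk₀ (ModuleCat.ofHom φ)) (zero_add 1) (hA.elim _ _)
  obtain ⟨ψ, rfl⟩ := Abelian.Ext.homEquiv₀.symm.surjective y
  refine ⟨ψ.hom, ?_⟩
  have h : Abelian.Ext.mk₀ (ψ ≫ ModuleCat.ofHom g) = Abelian.Ext.mk₀ (ModuleCat.ofHom φ) := by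
    simpa using hy
  have := Abelian.Ext.homEquiv₀.symm.injective h
  simpa using congrArg ModuleCat.Hom.hom this

theorem ExtZero.of_subsingleton_left [Subsingleton A] (i : ℕ) : ExtZero R A N i :=
  subsingleton_of_forall_eq 0 fun x => by
    have h : 𝟙 (ModuleCat.of R A) = 0 := by ext y; exact Subsingleton.elim _ _
    rw [← Abelian.Ext.mk₀_id_comp x, h, Abelian.Ext.mk₀_zero, Abelian.Ext.zero_comp]

theorem ExtZero.of_subsingleton_right [Subsingleton N] (i : ℕ) : ExtZero R A N i :=
  subsingleton_of_forall_eq 0 fun x => by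
    have h : 𝟙 (ModuleCat.of R N) = 0 := by ext y; exact Subsingleton.elim _ _
    rw [← Abelian.Ext.comp_mk₀_id x, h, Abelian.Ext.mk₀_zero, Abelian.Ext.comp_zero]

theorem ExtZero.of_equiv {A' : Type u} [AddCommGroup A'] [Module R A'] (e : A ≃ₗ[R] A') {i : ℕ}
    (h : ExtZero R A N i) : ExtZero R A' N i := by
  refine ExtZero.of_ses_left₂ (A := PUnit) (C := A) (f := 0) (g := e.symm.toLinearMap)
    (fun _ _ _ => rfl) e.symm.surjective ?_ (ExtZero.of_subsingleton_left i) h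
  intro y
  have : e.symm y = 0 ↔ y = 0 := e.symm.map_eq_zero_iff
  simp [this, eq_comm]

/-- Nakayama's lemma for `Ext^i(A, N)`, which is a finitely generated module. -/
theorem ExtZero.of_smul_surjective [IsNoetherianRing R] [IsLocalRing R]
    [Module.Finite R A] [Module.Finite R N]
    {y : R} (hy : y ∈ IsLocalRing.maximalIdeal R) {i : ℕ}
    (h : ∀ x : Abelian.Ext (ModuleCat.of R A) (ModuleCat.of R N) i, ∃ z, y • z = x) :
    ExtZero R A N i := by
  have htop : (⊤ : Submodule R (Abelian.Ext (ModuleCat.of R A) (ModuleCat.of R N) i)) = ⊥ := by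
    refine Submodule.eq_bot_of_le_smul_of_le_jacobson_bot (IsLocalRing.maximalIdeal R) ⊤
      Module.Finite.fg_top ?_ (IsLocalRing.maximalIdeal_le_jacobson _)
    intro x _
    obtain ⟨z, rfl⟩ := h x
    exact Submodule.smul_mem_smul hy trivial
  refine subsingleton_of_forall_eq 0 fun x => ?_
  have : x ∈ (⊤ : Submodule R _) := trivial
  rw [htop] at this
  exact this

/-- If `y ∈ m` is `A`-regular, then `Ext^i(A, N) = y Ext^i(A, N)` as soon as
`Ext^{i+1}(A/yA, N) = 0`, so Nakayama's lemma applies. -/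
theorem ExtZero.of_ses_smul [IsNoetherianRing R] [IsLocalRing R]
    [Module.Finite R A] [Module.Finite R N]
    {y : R} (hy : y ∈ IsLocalRing.maximalIdeal R) {i : ℕ} (hreg : IsSMulRegular A y)
    (h : ExtZero R (QuotSMulTop y A) N (i + 1)) : ExtZero R A N i := by
  refine ExtZero.of_smul_surjective hy fun x => ?_
  obtain ⟨z, hz⟩ := Abelian.Ext.contravariant_sequence_exact₁
    (IsSMulRegular.smulShortComplex_shortExact (M := ModuleCat.of R A) hreg) _ x
      (add_comm 1 i) (h.elim _ _)
  have key : ∀ w : Abelian.Ext (ModuleCat.of R A) (ModuleCat.of R N) i,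
      (Abelian.Ext.mk₀ (y • 𝟙 (ModuleCat.of R A))).comp w (zero_add i) = y • w := fun w => by
    rw [Abelian.Ext.mk₀_smul, Abelian.Ext.smul_comp, Abelian.Ext.mk₀_id_comp]
  exact ⟨z, (key z).symm.trans hz⟩

end ses

/-! ### Regular sequences and associated primes -/

section alg
open IsLocalRing RingTheory.Sequence Pointwise
variable {R : Type u} [CommRing R] [IsNoetherianRing R] [IsLocalRing R]

/-- Prime quotients cut out by associated primes of a module admitting a weakly regular sequence
of length `n` in `m` have dimension at least `n`. The dimension of `R/p` is the coheight of `p`.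

For a sequence `x, rs` and an associated prime `p`, there is an associated prime `q` of `N/xN`
that contains both `p` and `x`, whereas `x ∉ p`; so the coheight of `p` exceeds that of `q`. -/
theorem length_le_coheight (rs : List R) (hmem : ∀ r ∈ rs, r ∈ maximalIdeal R)
    (N : Type u) [AddCommGroup N] [Module R N] [Module.Finite R N]
    (hrs : IsWeaklyRegular N rs) (p : PrimeSpectrum R) (hp : IsAssociatedPrime p.asIdeal N) :
    (rs.length : ℕ∞) ≤ Order.coheight p := by
  induction rs generalizing N p with
  | nil => simp
  | cons x rs ih =>
    rw [isWeaklyRegular_cons_iff] at hrs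
    obtain ⟨hx, hrs⟩ := hrs
    simp only [List.mem_cons, forall_eq_or_imp] at hmem
    -- the elements of `N` killed by `p`; `x` acts injectively on it, and `K ∩ xN = xK`
    let K : Submodule R N := Submodule.torsionBySet R N p.asIdeal
    have hK : ∀ n, n ∈ K ↔ ∀ a ∈ p.asIdeal, a • n = 0 := fun n => by
      simp [K, Submodule.mem_torsionBySet_iff]
    have hKne : K ≠ ⊥ := by
      obtain ⟨-, n, hn⟩ := isAssociatedPrime_iff.mp hp
      intro h
      have hnK : n ∈ K := (hK n).mpr fun a ha => by
        rw [hn] at ha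
        simpa [Submodule.mem_colon_singleton] using ha
      rw [h, Submodule.mem_bot] at hnK
      apply p.2.ne_top
      rw [hn, hnK]
      simp
    have hxp : x ∉ p.asIdeal := by
      intro h
      apply hKne
      rw [eq_bot_iff]
      intro n hn
      exact hx (by simpa using (hK n).mp hn x h)
    -- otherwise `K = xK`, which contradicts Nakayama's lemma
    obtain ⟨k, hkK, hk⟩ : ∃ k ∈ K, k ∉ x • (⊤ : Submodule R N) := by
      by_contra! hcon
      apply hKne
      refine Submodule.eq_bot_of_le_smul_of_le_jacobson_bot (maximalIdeal R) K
        (IsNoetherian.noetherian K) ?_ (maximalIdeal_le_jacobson _)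
      intro k hkK
      obtain ⟨n, -, rfl⟩ := (Submodule.mem_smul_pointwise_iff_exists _ _ _).mp (hcon k hkK)
      refine Submodule.smul_mem_smul hmem.1 ((hK n).mpr fun a ha => hx ?_)
      have := (hK _).mp hkK a ha
      have h' : a • x • n = 0 := this
      change x • a • n = x • 0
      rw [smul_comm x a n, h', smul_zero]
    have hk0 : (x • (⊤ : Submodule R N)).mkQ k ≠ 0 := by simpa using hk
    obtain ⟨q, hq, hle⟩ := exists_le_isAssociatedPrime_of_isNoetherianRing R
      (M := QuotSMulTop x N) _ hk0
    have hpq : p < ⟨q, hq.isPrime⟩ := by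
      refine lt_of_le_of_ne ?_ ?_
      · intro a ha
        apply hle
        rw [Submodule.mem_colon_singleton, ← map_smul, (hK k).mp hkK a ha, map_zero]
        simp
      · rintro rfl
        apply hxp
        apply hle
        rw [Submodule.mem_colon_singleton, ← map_smul, Submodule.mem_bot]
        exact (Submodule.Quotient.mk_eq_zero _).mpr
          (Submodule.smul_mem_pointwise_smul k x (⊤ : Submodule R N) trivial)
    have := ih hmem.2 (QuotSMulTop x N) hrs ⟨q, hq.isPrime⟩ hq
    calc ((x :: rs).length : ℕ∞) = rs.length + 1 := by simp
      _ ≤ Order.coheight (⟨q, hq.isPrime⟩ : PrimeSpectrum R) + 1 := by gcongr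
      _ ≤ _ := Order.coheight_add_one_le hpq

omit [IsNoetherianRing R] [IsLocalRing R] in
theorem coheight_le {d : ℕ} (hd : ringKrullDim R = d) (p : PrimeSpectrum R) :
    Order.coheight p ≤ d := by
  have := Order.coheight_le_krullDim p
  rw [← ringKrullDim, hd] at this
  exact_mod_cast this

/-- Over a ring of dimension `d`, nonzerodivisors of `R` act injectively on a module
admitting a weakly regular sequence of length `d` in `m`: its associated primes are minimal. -/
theorem isSMulRegular_of_nonZeroDivisor {d : ℕ} (hd : ringKrullDim R = d)
    (rs : List R) (hmem : ∀ r ∈ rs, r ∈ maximalIdeal R) (hlen : rs.length = d)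
    (N : Type u) [AddCommGroup N] [Module R N] [Module.Finite R N]
    (hrs : IsWeaklyRegular N rs) {r : R} (hr : r ∈ nonZeroDivisors R) : IsSMulRegular N r := by
  by_contra hcon
  have : r ∈ ⋃ p ∈ associatedPrimes R N, (p : Set R) := by
    rw [biUnion_associatedPrimes_eq_compl_regular]; exact hcon
  simp only [Set.mem_iUnion] at this
  obtain ⟨p, hp, hrp⟩ := this
  have hpp : p.IsPrime := IsAssociatedPrime.isPrime hp
  have h1 := length_le_coheight rs hmem N hrs ⟨p, hpp⟩ hp
  have hmin : p ∈ minimalPrimes R := by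
    refine ⟨⟨hpp, bot_le⟩, fun q hq hqp => ?_⟩
    by_contra hne
    have hlt : (⟨q, hq.1⟩ : PrimeSpectrum R) < ⟨p, hpp⟩ := lt_of_le_not_ge hqp hne
    have h2 := Order.coheight_add_one_le hlt
    have h3 := coheight_le hd ⟨q, hq.1⟩
    rw [hlen] at h1
    have : ((d : ℕ∞) + 1) ≤ d := (add_le_add_left h1 1).trans (h2.trans h3)
    norm_cast at this
    omega
  exact Set.disjoint_left.mp (Ideal.disjoint_nonZeroDivisors_of_mem_minimalPrimes hmin) hrp hr

/-- Modulo a regular sequence of length `dim R`, a nonzero finitely generated module has depth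
zero, so it contains a copy of the residue field. -/
theorem exists_residue_embedding {d : ℕ} (hd : ringKrullDim R = d)
    (rs : List R) (hmem : ∀ r ∈ rs, r ∈ maximalIdeal R) (hlen : rs.length = d)
    (N : Type u) [AddCommGroup N] [Module R N] [Module.Finite R N] [Nontrivial N]
    (hrs : IsWeaklyRegular N rs) :
    ∃ φ : (R ⧸ maximalIdeal R) →ₗ[R] (N ⧸ Ideal.ofList rs • (⊤ : Submodule R N)),
      Function.Injective φ := by
  have hns : ¬ Subsingleton
      ((R ⧸ maximalIdeal R) →ₗ[R] (N ⧸ Ideal.ofList rs • (⊤ : Submodule R N))) := by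
    rw [IsSMulRegular.subsingleton_linearMap_iff]
    -- a regular element on the quotient would extend `rs` to a sequence of length `d + 1`
    rintro ⟨r, hr, hreg⟩
    rw [Ideal.annihilator_quotient] at hr
    obtain ⟨p, hp⟩ := associatedPrimes.nonempty R N
    have hmem' : ∀ s ∈ rs ++ [r], s ∈ maximalIdeal R := by
      intro s hs
      rcases List.mem_append.mp hs with h | h
      · exact hmem s h
      · rwa [List.mem_singleton.mp h]
    have h1 := length_le_coheight (rs ++ [r]) hmem' N
      ((isWeaklyRegular_append_iff _ _ _).mpr ⟨hrs, by simpa using hreg⟩)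
      ⟨p, IsAssociatedPrime.isPrime hp⟩ hp
    have h2 := h1.trans (coheight_le hd _)
    simp only [List.length_append, hlen, List.length_singleton] at h2
    norm_cast at h2
    omega
  rw [not_subsingleton_iff_nontrivial] at hns
  obtain ⟨φ, hφ⟩ := exists_ne
    (0 : (R ⧸ maximalIdeal R) →ₗ[R] (N ⧸ Ideal.ofList rs • (⊤ : Submodule R N)))
  refine ⟨φ, ?_⟩
  have : IsSimpleModule R (R ⧸ maximalIdeal R) :=
    isSimpleModule_iff_isCoatom.mpr (maximalIdeal.isMaximal R).out
  exact (LinearMap.injective_or_eq_zero φ).resolve_right hφ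

end alg

section vanishing
open IsLocalRing RingTheory.Sequence Pointwise
variable {R : Type u} [CommRing R] [IsNoetherianRing R] [IsLocalRing R]

/-! ### Vanishing of Ext into a module of finite injective dimension -/

/-- Over a Cohen-Macaulay local ring of dimension `d`, a finitely generated module of finite
injective dimension has injective dimension at most `d`, tested on finitely generated modules.
The sequence `rs` expresses that `R` is Cohen-Macaulay. -/
theorem extZero_of_injDim {d : ℕ} (hd : ringKrullDim R = d)
    (rs : List R) (hmem : ∀ r ∈ rs, r ∈ maximalIdeal R) (hlen : rs.length = d)
    (hrs : IsWeaklyRegular R rs)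
    (ω : Type u) [AddCommGroup ω] [Module R ω] [Module.Finite R ω]
    (n : ℕ) (hn : ∀ (N : Type u) [AddCommGroup N] [Module R N] (i : ℕ), n < i → ExtZero R N ω i)
    (i : ℕ) (hi : d < i) (N : Type u) [AddCommGroup N] [Module R N] [Module.Finite R N] :
    ExtZero R N ω i := by
  -- descending induction on `i`, starting above the given bound `n`
  obtain ⟨k, hk⟩ : ∃ k, n < i + k := ⟨n + 1, by omega⟩
  induction k generalizing i N with
  | zero => exact hn N i hk
  | succ k ih =>
    have hsucc : ∀ (N : Type u) [AddCommGroup N] [Module R N] [Module.Finite R N],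
        ExtZero R N ω (i + 1) := fun N _ _ _ => ih (i + 1) (by omega) N (by omega)
    refine IsNoetherianRing.induction_on_isQuotientEquivQuotientPrime R (M := N) inferInstance
      (motive := fun N _ _ _ => ExtZero R N ω i) ?_ ?_ ?_
    · intro N _ _ _ _
      exact ExtZero.of_subsingleton_left i
    · intro N _ _ _ p e
      refine ExtZero.of_equiv e.symm ?_
      by_cases hp : p.asIdeal = maximalIdeal R
      · rw [hp]
        -- `k` embeds into `R/(rs)`, of projective dimension `d < i`
        obtain ⟨φ, hφ⟩ := exists_residue_embedding hd rs hmem hlen R hrs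
        refine ExtZero.of_ses_left₁ hφ φ.range.mkQ_surjective (LinearMap.exact_map_mkQ_range φ)
          ?_ (hsucc _)
        have hpd := ModuleCat.projectiveDimension_quotient_eq_add_length_of_isWeaklyRegular
          (ModuleCat.of R R) rs hrs hmem
        rw [ModuleCat.projectiveDimension_eq_zero_of_projective (ModuleCat.of R R),
          zero_add] at hpd
        have := (projectiveDimension_le_iff _ _).mp hpd.le
        exact HasProjectiveDimensionLT.subsingleton _ (rs.length + 1) i (by omega) _
      · -- an element of `m` outside `p` is regular on the domain `R/p`
        obtain ⟨y, hy, hyp⟩ := SetLike.exists_of_lt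
          (lt_of_le_of_ne (le_maximalIdeal p.2.ne_top) hp)
        refine ExtZero.of_ses_smul hy ?_ (hsucc _)
        rw [isSMulRegular_iff_right_eq_zero_of_smul]
        intro z hz
        obtain ⟨z, rfl⟩ := Ideal.Quotient.mk_surjective z
        have h : y * z ∈ p.asIdeal := Ideal.Quotient.eq_zero_iff_mem.mp hz
        exact Ideal.Quotient.eq_zero_iff_mem.mpr ((p.2.mem_or_mem h).resolve_left hyp)
    · intro N₁ _ _ _ N₂ _ _ _ N₃ _ _ _ f g hf hg hfg h1 h3
      exact ExtZero.of_ses_left₂ hf hg hfg h1 h3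

/-- An `M`-regular sequence of length `l` in `m` improves the vanishing range `i > d` of
`Ext^i(M, ω)` to `i > d - l`. -/
theorem extZero_of_isWeaklyRegular {d : ℕ}
    (ω : Type u) [AddCommGroup ω] [Module R ω] [Module.Finite R ω]
    (hω : ∀ i, d < i → ∀ (N : Type u) [AddCommGroup N] [Module R N] [Module.Finite R N],
      ExtZero R N ω i)
    (rs : List R) (hmem : ∀ r ∈ rs, r ∈ maximalIdeal R)
    (M : Type u) [AddCommGroup M] [Module R M] [Module.Finite R M]
    (hrs : IsWeaklyRegular M rs) (i : ℕ) (hi : d < i + rs.length) : ExtZero R M ω i := by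
  induction rs generalizing M i with
  | nil => exact hω i (by simpa using hi) M
  | cons x rs ih =>
    rw [isWeaklyRegular_cons_iff] at hrs
    simp only [List.mem_cons, forall_eq_or_imp] at hmem
    refine ExtZero.of_ses_smul hmem.1 hrs.1 (ih hmem.2 _ hrs.2 _ ?_)
    simp only [List.length_cons] at hi
    omega

/-! ### Symmetry of bilinear maps -/

omit [IsNoetherianRing R] [IsLocalRing R] in
/-- Bilinear maps `M × M → ω/(rs)ω` lift to `ω`, so symmetry descends along `ω → ω/(rs)ω`. -/
theorem symm_of_lift (M : Type u) [AddCommGroup M] [Module R M]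
    (rs : List R) (ω : Type u) [AddCommGroup ω] [Module R ω]
    (hrs : IsWeaklyRegular ω rs)
    (h1 : ∀ i, 1 ≤ i → i ≤ rs.length → ExtZero R M ω i)
    (h2 : ∀ i, 1 ≤ i → i ≤ rs.length → ExtZero R M (M →ₗ[R] ω) i)
    (hsymm : ∀ (b : M →ₗ[R] M →ₗ[R] ω) x y, b x y = b y x)
    (b : M →ₗ[R] M →ₗ[R] (ω ⧸ Ideal.ofList rs • (⊤ : Submodule R ω))) (x y : M) :
    b x y = b y x := by
  induction rs generalizing ω with
  | nil =>
    let e : (ω ⧸ Ideal.ofList ([] : List R) • (⊤ : Submodule R ω)) ≃ₗ[R] ω :=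
      Submodule.quotEquivOfEqBot _ (by simp)
    have := hsymm (b.compr₂ e.toLinearMap) x y
    exact e.injective this
  | cons r rs ih =>
    rw [isWeaklyRegular_cons_iff] at hrs
    obtain ⟨hr, hrs⟩ := hrs
    -- `0 → ω → ω → ω/rω → 0` stays exact under `Hom(M, -)` because `Ext^1(M, ω) = 0`
    have hinj : Function.Injective (LinearMap.lsmul R ω r) := hr
    have hsurj : Function.Surjective (r • (⊤ : Submodule R ω)).mkQ := Submodule.mkQ_surjective _
    have hex := LinearMap.exact_lsmul_mkQ_smul_top ω r
    let f : (M →ₗ[R] ω) →ₗ[R] (M →ₗ[R] ω) := LinearMap.lsmul R _ r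
    let g : (M →ₗ[R] ω) →ₗ[R] (M →ₗ[R] QuotSMulTop r ω) :=
      LinearMap.compRight R (r • (⊤ : Submodule R ω)).mkQ
    have hf : Function.Injective f := by
      intro a b hab
      ext m
      exact hr (LinearMap.congr_fun hab m)
    have hg : Function.Surjective g := fun φ =>
      ExtZero.exists_lift hinj hsurj hex (h1 1 le_rfl (by simp)) φ
    have hfg : Function.Exact f g := by
      intro φ
      constructor
      · intro h
        have hφ : ∀ m, ∃ w, r • w = φ m := fun m => (hex (φ m)).mp (LinearMap.congr_fun h m)
        choose w hw using hφ
        refine ⟨⟨⟨w, fun a b => hr ?_⟩, fun a b => hr ?_⟩, ?_⟩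
        · simp [hw]
        · simp [hw, smul_comm r a (w b)]
        · ext m
          exact hw m
      · rintro ⟨ψ, rfl⟩
        ext m
        exact hex.apply_apply_eq_zero (ψ m)
    let e := Submodule.quotOfListConsSMulTopEquivQuotSMulTopInner ω r rs
    refine e.injective (ih (QuotSMulTop r ω) hrs ?_ ?_ ?_ (b.compr₂ e.toLinearMap))
    · intro i hi hi'
      exact ExtZero.of_ses_right₃ hinj hsurj hex (h1 i hi (by simp; omega))
        (h1 (i+1) (by omega) (by simpa using hi'))
    · intro i hi hi'
      exact ExtZero.of_ses_right₃ hf hg hfg (h2 i hi (by simp; omega))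
        (h2 (i+1) (by omega) (by simpa using hi'))
    · intro b x y
      obtain ⟨c, rfl⟩ := ExtZero.exists_lift hf hg hfg (h2 1 le_rfl (by simp)) b
      exact congrArg (r • (⊤ : Submodule R ω)).mkQ (hsymm c x y)

omit [IsNoetherianRing R] [IsLocalRing R] in
/-- Elements of a rank one module are, up to nonzerodivisors, multiples of a fixed element. -/
theorem exists_generic_generator (M : Type u) [AddCommGroup M] [Module R M]
    (e : (FractionRing R ⊗[R] M) ≃ₗ[FractionRing R] FractionRing R) :
    ∃ g : M, ∀ x : M, ∃ t ∈ nonZeroDivisors R, ∃ a : R, t • x = a • g := by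
  obtain ⟨⟨g, s⟩, hg⟩ := IsLocalizedModule.surj (nonZeroDivisors R)
    (TensorProduct.mk R (FractionRing R) M 1) (e.symm 1)
  refine ⟨g, fun x => ?_⟩
  obtain ⟨⟨a, t⟩, hat⟩ := IsLocalization.surj (nonZeroDivisors R)
    (e (TensorProduct.mk R (FractionRing R) M 1 x))
  have hsmul : ∀ (r : R) (m : M), e (TensorProduct.mk R (FractionRing R) M 1 (r • m)) =
      algebraMap R (FractionRing R) r * e (TensorProduct.mk R (FractionRing R) M 1 m) := by
    intro r m
    rw [LinearMap.map_smul, ← algebraMap_smul (FractionRing R) r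
      (TensorProduct.mk R (FractionRing R) M 1 m), map_smul, smul_eq_mul]
  have key : TensorProduct.mk R (FractionRing R) M 1 ((s * t : R) • x) =
      TensorProduct.mk R (FractionRing R) M 1 (a • g) := by
    apply e.injective
    have h1 : e (TensorProduct.mk R (FractionRing R) M 1 g) = algebraMap R _ s := by
      rw [← hg, Submonoid.smul_def, ← algebraMap_smul (FractionRing R), map_smul,
        LinearEquiv.apply_symm_apply, smul_eq_mul, mul_one]
    rw [hsmul, hsmul, h1, map_mul, ← hat]
    ring
  obtain ⟨c, hc⟩ := (IsLocalizedModule.eq_iff_exists (nonZeroDivisors R)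
    (TensorProduct.mk R (FractionRing R) M 1)).mp key
  refine ⟨c * (s * t), (c * (s * t)).2, c * a, ?_⟩
  simpa [mul_smul, Submonoid.smul_def] using hc

omit [IsNoetherianRing R] [IsLocalRing R] in
/-- Up to nonzerodivisors `x` and `y` are multiples of one element `g`, so `b x y` and `b y x`
are both determined in the same way by `b g g`. -/
theorem symm_of_rankOne (M : Type u) [AddCommGroup M] [Module R M]
    (e : (FractionRing R ⊗[R] M) ≃ₗ[FractionRing R] FractionRing R)
    (ω : Type u) [AddCommGroup ω] [Module R ω]
    (hω : ∀ r ∈ nonZeroDivisors R, IsSMulRegular ω r)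
    (b : M →ₗ[R] M →ₗ[R] ω) (x y : M) : b x y = b y x := by
  obtain ⟨g, hg⟩ := exists_generic_generator M e
  obtain ⟨s, hs, α, hx⟩ := hg x
  obtain ⟨t, ht, β, hy⟩ := hg y
  apply hω s hs
  apply hω t ht
  have h1 : t • s • b x y = b (s • x) (t • y) := by
    rw [map_smul, map_smul, LinearMap.smul_apply]
  have h2 : t • s • b y x = b (t • y) (s • x) := by
    rw [map_smul, map_smul, LinearMap.smul_apply, smul_comm]
  have h3 : b (s • x) (t • y) = b (t • y) (s • x) := by
    rw [hx, hy]
    simp only [map_smul, LinearMap.smul_apply]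
    exact smul_comm ..
  exact h1.trans (h3.trans h2.symm)

omit [IsNoetherianRing R] in
/-- If all bilinear maps from `M` to a module containing the residue field are symmetric,
then `M/mM` has dimension at most one. -/
theorem cyclic_of_symm (M : Type u) [AddCommGroup M] [Module R M] [Module.Finite R M]
    (W : Type u) [AddCommGroup W] [Module R W] (φ : (R ⧸ maximalIdeal R) →ₗ[R] W)
    (hφ : Function.Injective φ)
    (hsymm : ∀ (b : M →ₗ[R] M →ₗ[R] W) x y, b x y = b y x) :
    ∃ x : M, Submodule.span R {x} = ⊤ := by
  let : Field (R ⧸ maximalIdeal R) := Ideal.Quotient.field _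
  -- linear forms with values in `k` separate the points of `M/mM`
  have hker : ∀ y : M, (∀ f : M →ₗ[R] (R ⧸ maximalIdeal R), f y = 0) →
      y ∈ maximalIdeal R • (⊤ : Submodule R M) := by
    intro y hy
    rw [← Submodule.Quotient.mk_eq_zero,
      ← Module.forall_dual_apply_eq_zero_iff (R ⧸ maximalIdeal R)]
    intro F
    exact hy ((F.restrictScalars R) ∘ₗ Submodule.mkQ _)
  have hcomm : ∀ (f g : M →ₗ[R] (R ⧸ maximalIdeal R)) (x y : M), f x * g y = f y * g x := by
    intro f g x y
    apply hφ
    exact hsymm (((LinearMap.mul R (R ⧸ maximalIdeal R)).compl₁₂ f g).compr₂ φ) x y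
  obtain ⟨x, hx⟩ : ∃ x : M, ∀ y, ∃ a : R, y - a • x ∈ maximalIdeal R • (⊤ : Submodule R M) := by
    by_cases h : ∃ (f : M →ₗ[R] (R ⧸ maximalIdeal R)) (x : M), f x ≠ 0
    · obtain ⟨f, x, hfx⟩ := h
      refine ⟨x, fun y => ?_⟩
      -- symmetry gives `g y = (f y / f x) g x` for every form `g`
      obtain ⟨a, ha⟩ := Ideal.Quotient.mk_surjective (f y / f x)
      refine ⟨a, hker _ fun g => ?_⟩
      have h1 := hcomm f g x y
      have h2 : a • g x = (f y / f x) * g x := by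
        rw [← ha, Algebra.smul_def]; rfl
      rw [map_sub, map_smul, h2]
      field_simp
      linear_combination h1
    · push Not at h
      exact ⟨0, fun y => ⟨0, hker _ fun g => h g _⟩⟩
  refine ⟨x, ?_⟩
  rw [eq_top_iff]
  refine Submodule.le_of_le_smul_of_le_jacobson_bot (I := maximalIdeal R) Module.Finite.fg_top
    (maximalIdeal_le_jacobson _) ?_
  intro y _
  obtain ⟨a, ha⟩ := hx y
  rw [← add_sub_cancel (a • x) y]
  exact Submodule.add_mem_sup (Submodule.smul_mem _ _ (Submodule.mem_span_singleton_self x)) ha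

/-! ### Depth and regular sequences -/

/-- Rees's theorem: depth at least `d`, in terms of `Ext`, provides a regular sequence of
length `d`. -/
theorem exists_regular_of_depth (M : Type u) [AddCommGroup M] [Module R M] [Module.Finite R M]
    [Nontrivial M] {d : ℕ} (h : ∀ i < d, ExtZero R (R ⧸ maximalIdeal R) M i) :
    ∃ rs : List R, rs.length = d ∧ (∀ r ∈ rs, r ∈ maximalIdeal R) ∧ IsWeaklyRegular M rs := by
  have hlt : maximalIdeal R • (⊤ : Submodule R M) < ⊤ := by
    refine lt_top_iff_ne_top.mpr fun h => ?_
    exact top_ne_bot (Submodule.eq_bot_of_le_smul_of_le_jacobson_bot (maximalIdeal R)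
      (⊤ : Submodule R M) Module.Finite.fg_top h.ge (maximalIdeal_le_jacobson _))
  obtain ⟨rs, h1, h2, h3⟩ := ModuleCat.exists_isRegular_of_exists_subsingleton_ext
    (maximalIdeal R) d (ModuleCat.of R M) hlt (ModuleCat.of R (R ⧸ maximalIdeal R))
    (by rw [Module.support_eq_zeroLocus, Ideal.annihilator_quotient]) h
  exact ⟨rs, h1, h2, h3.toIsWeaklyRegular⟩

end vanishing

theorem stmt_15 (R : Type u) [CommRing R] [IsNoetherianRing R] [IsLocalRing R]
    (hchar : ringChar (IsLocalRing.ResidueField R) ≠ 2)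
    (d : ℕ) (hd : ringKrullDim R = d)
    (hCM : DepthGE R (IsLocalRing.maximalIdeal R) R d)
    (ω : Type u) [AddCommGroup ω] [Module R ω]
    (hω : IsCanonicalModule R (IsLocalRing.maximalIdeal R) d ω)
    (M : Type u) [AddCommGroup M] [Module R M] [Module.Finite R M]
    (hMCM : DepthGE R (IsLocalRing.maximalIdeal R) M d)
    (hrank : HasRankOne R M)
    (hext : ∀ i : ℕ, 1 ≤ i → i ≤ d →
      IsZero (((Ext R (ModuleCat.{u} R) i).obj
        (Opposite.op (ModuleCat.of R M))).obj (ModuleCat.of R (M →ₗ[R] ω)))) :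
    ∃ x : M, Submodule.span R {x} = ⊤ := by
  obtain ⟨hfin, hdepth, ⟨n, hinj⟩, htype⟩ := hω
  rcases subsingleton_or_nontrivial M with hM | hM
  · exact ⟨0, Subsingleton.elim _ _⟩
  -- `Ext^d(k, ω)` is simple, in particular nonzero
  have hωne : Nontrivial ω := by
    by_contra h
    rw [not_nontrivial_iff_subsingleton] at h
    have h0 : IsZero (extResidue R (IsLocalRing.maximalIdeal R) ω d) :=
      (isZero_Ext_iff _ _ _).mpr (ExtZero.of_subsingleton_right d)
    have h1 := ModuleCat.subsingleton_of_isZero h0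
    exact not_nontrivial_iff_subsingleton.mpr h1 (IsSimpleModule.nontrivial R _)
  obtain ⟨ss, hsslen, hssmem, hss⟩ := exists_regular_of_depth (R := R) R (d := d)
    fun i hi => (isZero_Ext_iff _ _ _).mp (hCM i hi)
  obtain ⟨ts, htslen, htsmem, hts⟩ := exists_regular_of_depth (R := R) M (d := d)
    fun i hi => (isZero_Ext_iff _ _ _).mp (hMCM i hi)
  obtain ⟨rs, hrslen, hrsmem, hrs⟩ := exists_regular_of_depth (R := R) ω (d := d)
    fun i hi => (isZero_Ext_iff _ _ _).mp (hdepth i hi)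
  have hωM : ∀ i, 1 ≤ i → ExtZero R M ω i := fun i hi =>
    extZero_of_isWeaklyRegular ω
      (fun j hj N _ _ _ => extZero_of_injDim hd ss hssmem hsslen hss ω n
        (fun N _ _ j hj => (isZero_Ext_iff _ _ _).mp (hinj (ModuleCat.of R N) j hj)) j hj N)
      ts htsmem M hts i (by omega)
  obtain ⟨e⟩ := hrank
  have hsymm := symm_of_rankOne M e ω fun r hr =>
    isSMulRegular_of_nonZeroDivisor hd rs hrsmem hrslen ω hrs hr
  obtain ⟨φ, hφ⟩ := exists_residue_embedding hd rs hrsmem hrslen ω hrs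
  exact cyclic_of_symm M _ φ hφ
    (symm_of_lift M rs ω hrs (fun i hi _ => hωM i hi)
      (fun i hi hi' => (isZero_Ext_iff _ _ _).mp (hext i hi (hrslen ▸ hi'))) hsymm)
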